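/- In the lattice I_{1,6} with h = 3e_0 - e_1 - ... - e_6, the set of vectors β with β·β = -1 and β·h = 1 has exactly 27 elements. -/

import Mathlib

/-- The intersection form on the lattice I_{1,6} = ℤ^7: diag(1,-1,-1,-1,-1,-1,-1). -/
def Ip (x y : Fin 7 → ℤ) : ℤ := x 0 * y 0 - ∑ i : Fin 6, x i.succ * y i.succ

/-- The hyperplane class h = 3e₀ - e₁ - ⋯ - e₆. -/
def hcl : Fin 7 → ℤ := ![3, -1, -1, -1, -1, -1, -1]

/-!
Write `β = (a, x)` with `a : ℤ` and `x : ℤⁿ`. The two equations say that `∑ xᵢ = 1 - 3a` and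
`∑ xᵢ² = a² + 1`. For `n ≤ 6`, Cauchy–Schwarz gives `(1 - 3a)² ≤ 6(a² + 1)`, hence `0 ≤ a ≤ 2`.
For these three values `∑ xᵢ²` equals `± ∑ xᵢ`; since `k ≤ k²` for an integer `k`, with equality
only at `0` and `1`, the vector `±x` is the indicator of a set of `1`, `2` or `5` indices.
-/

section MomentFiber

variable {ι : Type*} [Fintype ι]

variable (ι) in
/-- The integer vectors with sum `p` and sum of squares `q`; the line classes whose coefficient at
`e₀` is fixed correspond to such a set. -/
def momentFiber (p q : ℤ) : Set (ι → ℤ) :=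
  {x | ∑ i, x i = p ∧ ∑ i, x i ^ 2 = q}

theorem eq_zero_or_one_of_sum_eq_sum_sq {x : ι → ℤ} (h : ∑ i, x i = ∑ i, x i ^ 2) (i : ι) :
    x i = 0 ∨ x i = 1 := by
  have hi : x i = x i ^ 2 :=
    (Finset.sum_eq_sum_iff_of_le fun j _ => Int.le_self_sq (x j)).1 h i (Finset.mem_univ i)
  exact IsIdempotentElem.iff_eq_zero_or_one.1 ((sq (x i)).symm.trans hi.symm)

theorem indicator_mem_momentFiber (s : Finset ι) :
    (s : Set ι).indicator 1 ∈ momentFiber ι s.card s.card := by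
  classical simp [momentFiber, Set.indicator_apply, ite_pow]

theorem momentFiber_self_eq_image_indicator (k : ℕ) :
    momentFiber ι k k =
      (fun s : Finset ι => (s : Set ι).indicator 1) ''
        (Finset.powersetCard k (Finset.univ : Finset ι)) := by
  ext x
  simp only [Set.mem_image, Finset.mem_coe, Finset.mem_powersetCard_univ]
  constructor
  · intro hx
    have h01 := eq_zero_or_one_of_sum_eq_sum_sq (hx.1.trans hx.2.symm)
    have hind : ((Finset.univ.filter (x · = 1) : Finset ι) : Set ι).indicator 1 = x := by
      ext i
      rcases h01 i with hi | hi <;> simp [hi]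
    refine ⟨Finset.univ.filter (x · = 1), ?_, hind⟩
    have hcard := (indicator_mem_momentFiber (Finset.univ.filter (x · = 1))).1
    rw [hind, hx.1] at hcard
    exact_mod_cast hcard.symm
  · rintro ⟨s, rfl, rfl⟩
    exact indicator_mem_momentFiber s

theorem encard_momentFiber_self (k : ℕ) :
    (momentFiber ι k k).encard = (Fintype.card ι).choose k := by
  have hinj : Function.Injective fun s : Finset ι => (s : Set ι).indicator (1 : ι → ℤ) :=
    fun _ _ h => Finset.coe_injective (Set.indicator_one_inj ℤ h)
  rw [momentFiber_self_eq_image_indicator, hinj.encard_image, Set.encard_coe_eq_coe_finsetCard,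
    Finset.card_powersetCard, Finset.card_univ]

theorem image_neg_momentFiber (p q : ℤ) :
    Neg.neg '' momentFiber ι p q = momentFiber ι (-p) q := by
  ext x
  simp [momentFiber, neg_eq_iff_eq_neg]

theorem encard_momentFiber_neg_self (k : ℕ) :
    (momentFiber ι (-k) k).encard = (Fintype.card ι).choose k := by
  rw [← image_neg_momentFiber, neg_injective.encard_image, encard_momentFiber_self]

theorem sq_le_card_mul_of_mem_momentFiber {p q : ℤ} {x : ι → ℤ} (hx : x ∈ momentFiber ι p q) :
    p ^ 2 ≤ Fintype.card ι * q := by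
  rw [← hx.1, ← hx.2]
  exact sq_sum_le_card_mul_sum_sq

end MomentFiber

theorem encard_eq_sum_encard_cons {α : Type*} {n : ℕ} {S : Set (Fin (n + 1) → α)} {A : Finset α}
    (hA : ∀ β ∈ S, β 0 ∈ A) :
    S.encard = ∑ a ∈ A, {x : Fin n → α | (Fin.cons a x : Fin (n + 1) → α) ∈ S}.encard := by
  let fiber (a : α) : Set (Fin (n + 1) → α) := {β ∈ S | β 0 = a}
  have hfiber (a : α) : fiber a = Fin.cons a '' {x | (Fin.cons a x : Fin (n + 1) → α) ∈ S} := by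
    ext β
    constructor
    · rintro ⟨hβ, rfl⟩
      exact ⟨Fin.tail β, by simpa using hβ, Fin.cons_self_tail β⟩
    · rintro ⟨x, hx, rfl⟩
      exact ⟨hx, rfl⟩
  have hunion : S = ⋃ a ∈ (A : Set α), fiber a := by
    ext β
    simpa [fiber] using hA β
  have hdisj : (A : Set α).PairwiseDisjoint fiber := fun _ _ _ _ hab =>
    Set.disjoint_left.2 fun _ ha hb => hab (ha.2.symm.trans hb.2)
  calc S.encard = (⋃ a ∈ (A : Set α), fiber a).encard := congrArg Set.encard hunion
    _ = ∑ a ∈ A, (fiber a).encard := by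
      rw [A.finite_toSet.encard_biUnion hdisj, finsum_mem_coe_finset]
    _ = ∑ a ∈ A, {x : Fin n → α | (Fin.cons a x : Fin (n + 1) → α) ∈ S}.encard :=
      Finset.sum_congr rfl fun a _ => by
        rw [hfiber, (Fin.cons_right_injective (α := fun _ => α) a).encard_image]

/-- The bilinear form `diag(1, -1, …, -1)` of the lattice `I_{1,n}`, the intersection form of the
blow-up of the projective plane in `n` points. -/
def lorentzForm (n : ℕ) (x y : Fin (n + 1) → ℤ) : ℤ :=
  x 0 * y 0 - ∑ i : Fin n, x i.succ * y i.succ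

/-- The class `3e₀ - e₁ - ⋯ - eₙ`, the anticanonical class of the blow-up of the projective plane
in `n` points. -/
def anticanonicalClass (n : ℕ) : Fin (n + 1) → ℤ :=
  Fin.cons 3 fun _ => -1

/-- The classes `β` of `I_{1,n}` with `β · β = -1` and anticanonical degree `1`. For `n ≤ 6` they
are the classes of the lines on a del Pezzo surface of degree `9 - n`. -/
def lineClasses (n : ℕ) : Set (Fin (n + 1) → ℤ) :=
  {β | lorentzForm n β β = -1 ∧ lorentzForm n β (anticanonicalClass n) = 1}

theorem cons_mem_lineClasses_iff {n : ℕ} {a : ℤ} {x : Fin n → ℤ} :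
    (Fin.cons a x : Fin (n + 1) → ℤ) ∈ lineClasses n ↔
      x ∈ momentFiber (Fin n) (1 - 3 * a) (a ^ 2 + 1) := by
  simp only [lineClasses, lorentzForm, anticanonicalClass, momentFiber, Set.mem_ofPred_eq,
    Fin.cons_zero, Fin.cons_succ, mul_neg_one, Finset.sum_neg_distrib, ← sq]
  constructor <;> rintro ⟨h₁, h₂⟩ <;> constructor <;> linarith

theorem apply_zero_mem_of_mem_lineClasses {n : ℕ} (hn : n ≤ 6) {β : Fin (n + 1) → ℤ}
    (hβ : β ∈ lineClasses n) : β 0 ∈ ({0, 1, 2} : Finset ℤ) := by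
  rw [← Fin.cons_self_tail β, cons_mem_lineClasses_iff] at hβ
  have hbound : (1 - 3 * β 0) ^ 2 ≤ 6 * (β 0 ^ 2 + 1) :=
    calc (1 - 3 * β 0) ^ 2 ≤ (n : ℤ) * (β 0 ^ 2 + 1) := by
          simpa using sq_le_card_mul_of_mem_momentFiber hβ
      _ ≤ 6 * (β 0 ^ 2 + 1) := by gcongr; exact_mod_cast hn
  have hnonneg : 0 ≤ β 0 := by nlinarith
  have hle : β 0 ≤ 2 := by nlinarith
  simp only [Finset.mem_insert, Finset.mem_singleton]
  omega

theorem lines_card_general {n : ℕ} (hn : n ≤ 6) :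
    (lineClasses n).ncard = n.choose 1 + n.choose 2 + n.choose 5 := by
  have h₀ : (momentFiber (Fin n) 1 1).encard = n.choose 1 := by
    simpa using encard_momentFiber_self (ι := Fin n) 1
  have h₁ : (momentFiber (Fin n) (-2) 2).encard = n.choose 2 := by
    simpa using encard_momentFiber_neg_self (ι := Fin n) 2
  have h₂ : (momentFiber (Fin n) (-5) 5).encard = n.choose 5 := by
    simpa using encard_momentFiber_neg_self (ι := Fin n) 5
  have hencard : (lineClasses n).encard = ↑(n.choose 1 + n.choose 2 + n.choose 5) := by
    rw [encard_eq_sum_encard_cons fun β hβ => apply_zero_mem_of_mem_lineClasses hn hβ]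
    simp only [cons_mem_lineClasses_iff, Set.ofPred_mem_eq]
    norm_num [h₀, h₁, h₂, add_assoc]
  rw [Set.ncard_def, hencard, ENat.toNat_natCast]

theorem lorentzForm_six : lorentzForm 6 = Ip :=
  rfl

theorem anticanonicalClass_six : anticanonicalClass 6 = hcl := by
  decide

/-- The set of line classes {β ∈ I_{1,6} : β·β = -1, β·h = 1} (the classes of the 27 lines
on a smooth cubic surface) has exactly 27 elements. -/
theorem lines_card :
    {β : Fin 7 → ℤ | Ip β β = -1 ∧ Ip β hcl = 1}.ncard = 27 := by
  simpa [lineClasses, lorentzForm_six, anticanonicalClass_six, Nat.choose] using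
    lines_card_general (n := 6) le_rfl
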